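/- Assume q ≤ 1/2, q + 2λ ≤ 1, λ > 0, 0 < q, and D ≥ 2. Let G = (V,E) ∈ G_{≤D}. If G is connected (with v_1 and v_2 in the same connected component), then |E[x·Ψ_G]| ≤ n^{−1/2} · [ min( (√n/K)·(λ/√q̄)^r , √(n/K)·λ^{r/2} ) ]^{|V|−1}, where r := |E|/(|V|−1). Moreover, if G has a connected component containing neither v_1 nor v_2, or if v_1 and v_2 lie in different connected components of G, then E[x·Ψ_G] = 0. -/

import Mathlib

/-!
Given the labels the edges are independent with `E[Y_ij | z] = λ · 1{z_i = z_j}`, so a monomial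
`P_{G,π}` has conditional expectation `λ^|E|` times the indicator that `z ∘ π` is constant along
the edges of `G`. Since `z ∘ π` is again i.i.d. uniform, both `E[x P̄_{G,π}]` and `E[P_{G,π}²]` are
averages over uniform labels of the nodes of `G` alone, independent of `π ∈ Π_V`.

Shifting the labels of a whole connected component by a constant (mod `K`) changes none of these
indicators. If `v_1` and `v_2` are not connected, averaging over the shifts of the component of
`v_1` kills `x`. If a component avoids both `v_1` and `v_2`, its centred factor is independent of
`x` and of the other factors, and it has mean zero.

If `G` is connected, `E[x P̄_{G,π}] = (1 - 1/K) μ` with `μ = λ^|E| K^{-(|V|-1)}`, whereas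
`E[P_{G,π}²] ≥ max(μ, q̄^|E|)` because an edge has second moment at least `λ` inside a community
and at least `q̄` everywhere. The two lower bounds give the two terms of the minimum, the remaining
factor being `√|Π_V| ≤ n^{(|V|-2)/2}`.
-/

open Classical Finset

noncomputable section

namespace SBM

/-- Index type for the edge slots of a graph on `n` nodes: ordered pairs `i < j`. -/
abbrev Pairs (n : ℕ) := {p : Fin n × Fin n // p.1 < p.2}

/-- A configuration of edges: one Boolean per pair `i < j`. -/
abbrev EdgeConf (n : ℕ) := Pairs n → Bool

/-- Community labels of the `n` nodes, with `K` communities. -/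
abbrev Lab (n K : ℕ) := Fin n → Fin K

/-- The recentered symmetric adjacency entries `Y i j = Y*_{ij} - q` (and `0` on the diagonal). -/
def Ymat (n : ℕ) (q : ℝ) (y : EdgeConf n) (i j : Fin n) : ℝ :=
  if h : i = j then 0
  else (if y ⟨(min i j, max i j), min_lt_max.mpr h⟩ then 1 else 0) - q

/-- Conditional connection probability of a pair given the labels. -/
def pEdge (n K : ℕ) (q lam : ℝ) (z : Lab n K) (p : Pairs n) : ℝ :=
  if z p.1.1 = z p.1.2 then q + lam else q

/-- SBM probability weight of a configuration `(z, y)`: labels are i.i.d. uniform on `Fin K`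
and, conditionally on `z`, edges are independent Bernoulli. -/
def wt (n K : ℕ) (q lam : ℝ) (z : Lab n K) (y : EdgeConf n) : ℝ :=
  ((K : ℝ)⁻¹) ^ n *
    ∏ p : Pairs n, (if y p then pEdge n K q lam z p else 1 - pEdge n K q lam z p)

/-- Expectation under the SBM. -/
def expec (n K : ℕ) (q lam : ℝ) (F : Lab n K → EdgeConf n → ℝ) : ℝ :=
  ∑ z : Lab n K, ∑ y : EdgeConf n, wt n K q lam z y * F z y

/-- Expectation conditionally on `z i = z j`. -/
def expecEq (n K : ℕ) (q lam : ℝ) (i j : Fin n) (F : Lab n K → EdgeConf n → ℝ) : ℝ :=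
  expec n K q lam (fun z y => if z i = z j then F z y else 0) /
    expec n K q lam (fun z _ => if z i = z j then 1 else 0)

/-- Expectation conditionally on `z i ≠ z j`. -/
def expecNe (n K : ℕ) (q lam : ℝ) (i j : Fin n) (F : Lab n K → EdgeConf n → ℝ) : ℝ :=
  expec n K q lam (fun z y => if z i ≠ z j then F z y else 0) /
    expec n K q lam (fun z _ => if z i ≠ z j then 1 else 0)

/-- Variance conditionally on `z i = z j`. -/
def varEq (n K : ℕ) (q lam : ℝ) (i j : Fin n) (F : Lab n K → EdgeConf n → ℝ) : ℝ :=
  expecEq n K q lam i j (fun z y => F z y ^ 2) - expecEq n K q lam i j F ^ 2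

/-- Variance conditionally on `z i ≠ z j`. -/
def varNe (n K : ℕ) (q lam : ℝ) (i j : Fin n) (F : Lab n K → EdgeConf n → ℝ) : ℝ :=
  expecNe n K q lam i j (fun z y => F z y ^ 2) - expecNe n K q lam i j F ^ 2

/-- The (centered) membership indicator `x = 1{z i0 = z i1} - 1/K`. -/
def xind (n K : ℕ) (i0 i1 : Fin n) (z : Lab n K) : ℝ :=
  (if z i0 = z i1 then 1 else 0) - 1 / K

/-- A template: a finite simple graph on `Fin v` (edges stored as ordered pairs `a < b`)
with the two distinguished nodes `0` and `1`. -/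
structure Template where
  v : ℕ
  hv : 2 ≤ v
  E : Finset (Fin v × Fin v)
  hE : ∀ e ∈ E, e.1 < e.2

namespace Template

/-- First distinguished node. -/
def v1 (T : Template) : Fin T.v := ⟨0, by have := T.hv; omega⟩

/-- Second distinguished node. -/
def v2 (T : Template) : Fin T.v := ⟨1, by have := T.hv; omega⟩

/-- The underlying simple graph of a template. -/
def graph (T : Template) : SimpleGraph (Fin T.v) :=
  SimpleGraph.fromRel fun a b => (a, b) ∈ T.E

end Template

/-- Labelings `Π_V`: injections sending the distinguished nodes to the nodes `0` and `1`. -/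
def PiV (n : ℕ) (hn : 2 ≤ n) (T : Template) : Finset (Fin T.v ↪ Fin n) :=
  Finset.univ.filter fun π =>
    π T.v1 = (⟨0, by omega⟩ : Fin n) ∧ π T.v2 = (⟨1, by omega⟩ : Fin n)

/-- The monomial `P_{G,π}(Y) = ∏_{(u,w) ∈ E} Y_{π u, π w}`. -/
def PG (n : ℕ) (q : ℝ) (T : Template) (π : Fin T.v ↪ Fin n) (y : EdgeConf n) : ℝ :=
  ∏ e ∈ T.E, Ymat n q y (π e.1) (π e.2)

/-- A matching between the node sets of two templates: no node appears twice. -/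
def IsMatching (T1 T2 : Template) (M : Finset (Fin T1.v × Fin T2.v)) : Prop :=
  (∀ p ∈ M, ∀ p' ∈ M, (p : Fin T1.v × Fin T2.v).1 = (p' : Fin T1.v × Fin T2.v).1 → p = p') ∧
  (∀ p ∈ M, ∀ p' ∈ M, (p : Fin T1.v × Fin T2.v).2 = (p' : Fin T1.v × Fin T2.v).2 → p = p')

/-- `Π(M)`: pairs of labelings compatible with the matching `M`. -/
def PiM (n : ℕ) (hn : 2 ≤ n) (T1 T2 : Template) (M : Finset (Fin T1.v × Fin T2.v)) :
    Set ((Fin T1.v ↪ Fin n) × (Fin T2.v ↪ Fin n)) :=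
  {pp | pp.1 ∈ PiV n hn T1 ∧ pp.2 ∈ PiV n hn T2 ∧
    ∀ (a : Fin T1.v) (b : Fin T2.v), pp.1 a = pp.2 b ↔ (a, b) ∈ M}

/-- An edge of `T1` is matched if its two endpoints are matched to the endpoints of an
edge of `T2`. -/
def EdgeMatched1 (T1 T2 : Template) (M : Finset (Fin T1.v × Fin T2.v))
    (e : Fin T1.v × Fin T1.v) : Prop :=
  ∃ e' ∈ T2.E, ((e.1, e'.1) ∈ M ∧ (e.2, e'.2) ∈ M) ∨ ((e.1, e'.2) ∈ M ∧ (e.2, e'.1) ∈ M)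

/-- An edge of `T2` is matched if its two endpoints are matched to the endpoints of an
edge of `T1`. -/
def EdgeMatched2 (T1 T2 : Template) (M : Finset (Fin T1.v × Fin T2.v))
    (e' : Fin T2.v × Fin T2.v) : Prop :=
  ∃ e ∈ T1.E, ((e.1, e'.1) ∈ M ∧ (e.2, e'.2) ∈ M) ∨ ((e.1, e'.2) ∈ M ∧ (e.2, e'.1) ∈ M)

/-- `|E_Δ|`: the number of unmatched edges (in either template). -/
def EDeltaCard (T1 T2 : Template) (M : Finset (Fin T1.v × Fin T2.v)) : ℕ :=
  (T1.E.filter fun e => ¬ EdgeMatched1 T1 T2 M e).card +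
    (T2.E.filter fun e => ¬ EdgeMatched2 T1 T2 M e).card

/-- `|U^{(1)}|`: the number of unmatched nodes of the first template. -/
def U1card (T1 T2 : Template) (M : Finset (Fin T1.v × Fin T2.v)) : ℕ :=
  (Finset.univ.filter fun a : Fin T1.v => ∀ p ∈ M, (p : Fin T1.v × Fin T2.v).1 ≠ a).card

/-- `|U^{(2)}|`: the number of unmatched nodes of the second template. -/
def U2card (T1 T2 : Template) (M : Finset (Fin T1.v × Fin T2.v)) : ℕ :=
  (Finset.univ.filter fun b : Fin T2.v => ∀ p ∈ M, (p : Fin T1.v × Fin T2.v).2 ≠ b).card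

/-- A pair of matched nodes is semi-matched if one of them is incident to an unmatched edge. -/
def IsSemiMatched (T1 T2 : Template) (M : Finset (Fin T1.v × Fin T2.v))
    (p : Fin T1.v × Fin T2.v) : Prop :=
  (∃ e ∈ T1.E, (e.1 = p.1 ∨ e.2 = p.1) ∧ ¬ EdgeMatched1 T1 T2 M e) ∨
  (∃ e' ∈ T2.E, (e'.1 = p.2 ∨ e'.2 = p.2) ∧ ¬ EdgeMatched2 T1 T2 M e')

/-- `M_SM`: the semi-matched pairs of `M`. -/
def MSM (T1 T2 : Template) (M : Finset (Fin T1.v × Fin T2.v)) :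
    Finset (Fin T1.v × Fin T2.v) :=
  M.filter (IsSemiMatched T1 T2 M)

/-- `M_PM`: the perfectly matched pairs of `M`. -/
def MPM (T1 T2 : Template) (M : Finset (Fin T1.v × Fin T2.v)) :
    Finset (Fin T1.v × Fin T2.v) :=
  M.filter fun p => ¬ IsSemiMatched T1 T2 M p

/-- A node is isolated if it is incident to no edge. -/
def IsIsolated (T : Template) (w : Fin T.v) : Prop :=
  ∀ e ∈ T.E, e.1 ≠ w ∧ e.2 ≠ w

/-- The pruned matching `M⁻`: remove the pair of first (resp. second) distinguished nodes
whenever that node is isolated in `T1` or in `T2`. -/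
def Mminus (T1 T2 : Template) (M : Finset (Fin T1.v × Fin T2.v)) :
    Finset (Fin T1.v × Fin T2.v) :=
  M.filter fun p =>
    ¬ ((p = (T1.v1, T2.v1) ∧ (IsIsolated T1 T1.v1 ∨ IsIsolated T2 T2.v1)) ∨
       (p = (T1.v2, T2.v2) ∧ (IsIsolated T1 T1.v2 ∨ IsIsolated T2 T2.v2)))

/-- `M ∈ M*`: every connected component of `T1` and of `T2` meets the pruned matching. -/
def InMstar (T1 T2 : Template) (M : Finset (Fin T1.v × Fin T2.v)) : Prop :=
  (∀ w : Fin T1.v, ∃ p ∈ Mminus T1 T2 M, T1.graph.Reachable w p.1) ∧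
  (∀ w : Fin T2.v, ∃ p ∈ Mminus T1 T2 M, T2.graph.Reachable w p.2)


/-- Canonical representative (the minimum) of the connected component of `w`. -/
def compRep (T : Template) (w : Fin T.v) : Fin T.v :=
  (Finset.univ.filter fun u => T.graph.Reachable w u).min'
    ⟨w, by
      simp only [Finset.mem_filter, Finset.mem_univ, true_and]
      exact SimpleGraph.Reachable.refl w⟩

/-- The edges of the connected component of `w`. -/
def compEdges (T : Template) (w : Fin T.v) : Finset (Fin T.v × Fin T.v) :=
  T.E.filter fun e => T.graph.Reachable e.1 w

/-- The monomial attached to the connected component of `w`. -/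
def Pcomp (n : ℕ) (q : ℝ) (T : Template) (π : Fin T.v ↪ Fin n) (w : Fin T.v)
    (y : EdgeConf n) : ℝ :=
  ∏ e ∈ compEdges T w, Ymat n q y (π e.1) (π e.2)

/-- Representatives of the connected components of `T` containing at least one edge. -/
def edgeCompReps (T : Template) : Finset (Fin T.v) :=
  Finset.univ.filter fun w => compRep T w = w ∧ ∃ e ∈ T.E, T.graph.Reachable e.1 w

/-- The centered polynomial `P̄_{G,π} = ∏_l (P_{G_l,π} - E[P_{G_l,π}])`, the product running
over the connected components with at least one edge. -/
def Pbar (n K : ℕ) (q lam : ℝ) (T : Template) (π : Fin T.v ↪ Fin n) (y : EdgeConf n) : ℝ :=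
  ∏ w ∈ edgeCompReps T,
    (Pcomp n q T π w y - expec n K q lam fun _ y' => Pcomp n q T π w y')

/-- `|Aut(G)|`: the number of automorphisms of the template fixing both distinguished nodes. -/
def autCard (T : Template) : ℕ :=
  Nat.card {σ : Equiv.Perm (Fin T.v) //
    σ T.v1 = T.v1 ∧ σ T.v2 = T.v2 ∧ ∀ a b, T.graph.Adj a b ↔ T.graph.Adj (σ a) (σ b)}

/-- The variance proxy `𝕍(G) = ((n-2)!/(n-|V|)!) |Aut(G)| E[P_{G,π}²]
  = |Aut(G)| ∑_{π ∈ Π_V} E[P_{G,π}²]`. -/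
def VG (n K : ℕ) (hn : 2 ≤ n) (q lam : ℝ) (T : Template) : ℝ :=
  autCard T * ∑ π ∈ PiV n hn T, expec n K q lam fun _ y => PG n q T π y ^ 2

/-- The normalized invariant polynomial `Ψ_G = P̄_G / √𝕍(G)`. -/
def Psi (n K : ℕ) (hn : 2 ≤ n) (q lam : ℝ) (T : Template) (y : EdgeConf n) : ℝ :=
  (∑ π ∈ PiV n hn T, Pbar n K q lam T π y) / Real.sqrt (VG n K hn q lam T)

/-- A template suitable for `𝒢_{≤D}`: between `1` and `D` edges, and no isolated node
except possibly the distinguished ones. -/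
def GoodTemplate (D : ℕ) (T : Template) : Prop :=
  1 ≤ T.E.card ∧ T.E.card ≤ D ∧
    ∀ w : Fin T.v, w ≠ T.v1 → w ≠ T.v2 → ¬ IsIsolated T w

/-- Equivalence of templates: a graph isomorphism mapping distinguished nodes to
distinguished nodes. -/
def TEquiv (T1 T2 : Template) : Prop :=
  ∃ σ : Fin T1.v ≃ Fin T2.v, σ T1.v1 = T2.v1 ∧ σ T1.v2 = T2.v2 ∧
    ∀ a b, T1.graph.Adj a b ↔ T2.graph.Adj (σ a) (σ b)

/-- `𝒢` is a valid choice for `𝒢_{≤D}`: a maximal collection of pairwise non-equivalent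
good templates. -/
def IsTemplateBasis (D : ℕ) (𝒢 : Set Template) : Prop :=
  (∀ T ∈ 𝒢, GoodTemplate D T) ∧
  (∀ T1 ∈ 𝒢, ∀ T2 ∈ 𝒢, TEquiv T1 T2 → T1 = T2) ∧
  ∀ T, GoodTemplate D T → ∃ T' ∈ 𝒢, TEquiv T T'

/-- A matching containing the pairs of distinguished nodes. -/
def IsMatching12 (T1 T2 : Template) (M : Finset (Fin T1.v × Fin T2.v)) : Prop :=
  IsMatching T1 T2 M ∧ (T1.v1, T2.v1) ∈ M ∧ (T1.v2, T2.v2) ∈ M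

/-- The edit distance `d(G^{(1)}, G^{(2)}) = min_M |E_Δ|`. -/
def editDist (T1 T2 : Template) : ℕ :=
  sInf {k : ℕ | ∃ M : Finset (Fin T1.v × Fin T2.v),
    IsMatching12 T1 T2 M ∧ k = EDeltaCard T1 T2 M}

open scoped BigOperators

/-! ### Uniform labels -/

section UniformLabels

variable {α β κ : Type*} [Fintype α] [DecidableEq α] [Fintype β] [DecidableEq β]
  [Fintype κ]

lemma expect_comp_inl_mul_comp_inr {γ : Type*} [Fintype γ] [DecidableEq γ] (e : α ⊕ β ≃ γ)
    (f : (α → κ) → ℝ) (g : (β → κ) → ℝ) :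
    𝔼 z : γ → κ, f (z ∘ e ∘ Sum.inl) * g (z ∘ e ∘ Sum.inr) = (𝔼 a, f a) * 𝔼 b, g b := by
  rw [Finset.expect_mul_expect, ← Finset.expect_product' univ univ fun a b => f a * g b]
  exact Fintype.expect_equiv
    ((e.symm.arrowCongr (.refl κ)).trans (Equiv.sumArrowEquivProdArrow α β κ)) _ _ fun _ => rfl

lemma expect_comp_embedding [Nonempty κ] (π : α ↪ β) (f : (α → κ) → ℝ) :
    𝔼 z : β → κ, f (z ∘ π) = 𝔼 c, f c := by
  let e : α ⊕ ((Set.range π)ᶜ : Set β) ≃ β :=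
    ((Equiv.ofInjective π π.injective).sumCongr (.refl _)).trans (Equiv.Set.sumCompl _)
  have h := expect_comp_inl_mul_comp_inr e f fun _ => (1 : ℝ)
  simp only [mul_one, Fintype.expect_one] at h
  exact h

lemma expect_mul_eq_mul_of_dependsOn [Nonempty κ] {s : Set β} {F H : (β → κ) → ℝ}
    (hF : DependsOn F s) (hH : DependsOn H sᶜ) :
    𝔼 z, F z * H z = (𝔼 z, F z) * 𝔼 z, H z := by
  obtain ⟨f, rfl⟩ := dependsOn_iff_exists_comp.1 hF
  obtain ⟨h, rfl⟩ := dependsOn_iff_exists_comp.1 hH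
  calc 𝔼 z : β → κ, f (s.domRestrict z) * h (sᶜ.domRestrict z)
      = (𝔼 a, f a) * 𝔼 b, h b := expect_comp_inl_mul_comp_inr (Equiv.Set.sumCompl s) f h
    _ = (𝔼 z : β → κ, f (s.domRestrict z)) * 𝔼 z : β → κ, h (sᶜ.domRestrict z) := by
      rw [← expect_comp_embedding (Function.Embedding.subtype (· ∈ s)) f,
        ← expect_comp_embedding (Function.Embedding.subtype (· ∈ sᶜ)) h]
      rfl

lemma expect_eqInd_sub_mul_eq_zero [DecidableEq κ] [AddGroup κ] {s : Set β} {i j : β}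
    (hi : i ∈ s) (hj : j ∉ s) {g : (β → κ) → ℝ}
    (hg : ∀ z t, g (z + s.indicator fun _ => t) = g z) :
    𝔼 z : β → κ, ((if z i = z j then 1 else 0) - 1 / (Fintype.card κ : ℝ)) * g z = 0 := by
  set x : (β → κ) → ℝ := fun z => (if z i = z j then 1 else 0) - 1 / (Fintype.card κ : ℝ)
  have hshift (t : κ) : 𝔼 z, x z * g z = 𝔼 z, x (z + s.indicator fun _ => t) * g z :=
    (Fintype.expect_equiv (Equiv.addRight (s.indicator fun _ => t)) _ _ fun z => by
      rw [Equiv.coe_addRight, hg]).symm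
  have hmean (z : β → κ) : 𝔼 t, x (z + s.indicator fun _ => t) = 0 := by
    have hx (t : κ) : x (z + s.indicator fun _ => t)
        = (if t = -z i + z j then 1 else 0) - 1 / (Fintype.card κ : ℝ) := by
      simp [x, hi, hj, eq_neg_add_iff_add_eq]
    simp [hx, Finset.expect_sub_distrib]
  calc 𝔼 z, x z * g z = 𝔼 t : κ, 𝔼 z, x (z + s.indicator fun _ => t) * g z := by
        rw [← Finset.expect_congr rfl fun t _ => hshift t, Fintype.expect_const]
    _ = 𝔼 z, (𝔼 t, x (z + s.indicator fun _ => t)) * g z := by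
        rw [Finset.expect_comm]; simp only [Finset.expect_mul]
    _ = 0 := by simp only [hmean, zero_mul, Finset.expect_const_zero]

lemma filter_forall_eq_eq_map_const [Nonempty β]
    [DecidablePred fun c : β → κ => ∀ a b, c a = c b] :
    ({c : β → κ | ∀ a b, c a = c b} : Finset (β → κ))
      = univ.map ⟨Function.const β, Function.const_injective⟩ := by
  ext c
  simp only [mem_filter, mem_univ, true_and, mem_map, Function.Embedding.coeFn_mk]
  exact ⟨fun h => ⟨c (Classical.arbitrary β), funext fun b => h _ b⟩, by rintro ⟨k, rfl⟩ _ _; rfl⟩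

lemma expect_forall_eq [Nonempty β] [Nonempty κ]
    [DecidablePred fun c : β → κ => ∀ a b, c a = c b] :
    𝔼 c : β → κ, (if ∀ a b, c a = c b then (1 : ℝ) else 0)
      = (1 / (Fintype.card κ : ℝ)) ^ (Fintype.card β - 1) := by
  have hβ : 0 < Fintype.card β := Fintype.card_pos
  rw [Fintype.expect_eq_sum_div_card, sum_boole, filter_forall_eq_eq_map_const, card_map,
    card_univ, Fintype.card_fun, Nat.cast_pow, one_div, inv_pow, div_eq_iff (by positivity),
    ← mul_pow_sub_one hβ.ne']
  field_simp

end UniformLabels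

lemma card_embeddings_le_of_eqOn {α β : Type*} [Fintype α] [Fintype β] {P : Finset (α ↪ β)}
    {s : Finset α} {f : α → β} (hP : ∀ π ∈ P, Set.EqOn π f s) :
    #P ≤ Fintype.card β ^ (Fintype.card α - #s) := by
  have hcard : Fintype.card ((sᶜ : Finset α) → β) = Fintype.card β ^ (Fintype.card α - #s) := by
    simp
  rw [← hcard, ← card_univ]
  refine card_le_card_of_injOn (fun π a => π a) (fun _ _ => mem_univ _) fun π hπ π' hπ' h => ?_
  ext a
  by_cases ha : a ∈ s
  · rw [hP π hπ ha, hP π' hπ' ha]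
  · exact congrFun h ⟨a, mem_compl.2 ha⟩

/-! ### Conditional expectation given the labels -/

lemma map_prod_sub_algebraMap {R A ι : Type*} [CommRing R] [CommRing A] [Algebra R A]
    (L : A →ₗ[R] R) (s : Finset ι) (f : ι → A) (m a : ι → R)
    (h : ∀ t ⊆ s, L (∏ i ∈ t, f i) = ∏ i ∈ t, m i) :
    L (∏ i ∈ s, (f i - algebraMap R A (a i))) = ∏ i ∈ s, (m i - a i) := by
  simp only [Finset.prod_sub, map_sum]
  refine sum_congr rfl fun t _ => ?_
  have hterm : (-1) ^ #t * (∏ i ∈ s \ t, f i) * ∏ i ∈ t, algebraMap R A (a i)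
      = ((-1) ^ #t * ∏ i ∈ t, a i) • ∏ i ∈ s \ t, f i := by
    rw [Algebra.smul_def, map_mul, map_pow, map_neg, map_one, map_prod]
    ring
  rw [hterm, map_smul, h _ sdiff_subset, smul_eq_mul]
  ring

section ConditionalExpectation

variable {n K : ℕ}

/-- The conditional expectation `E[· | z]` of a statistic of the edges given the labels `z`, as a
linear functional. -/
def condExpec (q lam : ℝ) (z : Lab n K) : (EdgeConf n → ℝ) →ₗ[ℝ] ℝ :=
  ∑ y, (∏ p, if y p then pEdge n K q lam z p else 1 - pEdge n K q lam z p) • LinearMap.proj y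

lemma condExpec_apply (q lam : ℝ) (z : Lab n K) (H : EdgeConf n → ℝ) :
    condExpec q lam z H
      = ∑ y, (∏ p, if y p then pEdge n K q lam z p else 1 - pEdge n K q lam z p) * H y := by
  simp [condExpec]

lemma expec_mul_eq_expect (q lam : ℝ) (g : Lab n K → ℝ) (H : EdgeConf n → ℝ) :
    expec n K q lam (fun z y => g z * H y) = 𝔼 z, g z * condExpec q lam z H := by
  simp only [expec, wt, condExpec_apply, Fintype.expect_eq_sum_div_card, Fintype.card_fun,
    Fintype.card_fin, Nat.cast_pow, div_eq_inv_mul, inv_pow, mul_sum]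
  exact sum_congr rfl fun z _ => sum_congr rfl fun y _ => by ring

lemma expec_eq_expect (q lam : ℝ) (H : EdgeConf n → ℝ) :
    expec n K q lam (fun _ y => H y) = 𝔼 z : Lab n K, condExpec q lam z H := by
  simpa only [one_mul] using expec_mul_eq_expect q lam (fun _ => 1) H

lemma condExpec_prod_univ (q lam : ℝ) (z : Lab n K) (φ : Pairs n → Bool → ℝ) :
    condExpec q lam z (fun y => ∏ p, φ p (y p))
      = ∏ p, (pEdge n K q lam z p * φ p true + (1 - pEdge n K q lam z p) * φ p false) := by
  simp only [condExpec_apply, ← prod_mul_distrib]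
  rw [← Fintype.prod_sum fun p b =>
    (if b then pEdge n K q lam z p else 1 - pEdge n K q lam z p) * φ p b]
  simp only [Fintype.sum_bool, if_true, Bool.false_eq_true, if_false]

lemma condExpec_prod (q lam : ℝ) (z : Lab n K) {ι : Type*} [Fintype ι] (p : ι ↪ Pairs n)
    (φ : Bool → ℝ) :
    condExpec q lam z (fun y => ∏ i, φ (y (p i)))
      = ∏ i, (pEdge n K q lam z (p i) * φ true + (1 - pEdge n K q lam z (p i)) * φ false) := by
  have extend (ψ : Pairs n → ℝ) : ∏ i, ψ (p i) = ∏ r, if r ∈ univ.map p then ψ r else 1 := by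
    rw [prod_ite_mem, univ_inter, prod_map]
  have h := condExpec_prod_univ q lam z fun r b => if r ∈ univ.map p then φ b else 1
  rw [extend fun r => pEdge n K q lam z r * φ true + (1 - pEdge n K q lam z r) * φ false,
    funext fun y : EdgeConf n => extend fun r => φ (y r), h]
  refine prod_congr rfl fun r _ => ?_
  split_ifs <;> ring

/-- The slot of `Pairs n` joining two distinct nodes, in whichever order they come. -/
def edgeSlot {i j : Fin n} (h : i ≠ j) : Pairs n :=
  ⟨(min i j, max i j), min_lt_max.2 h⟩

lemma pEdge_edgeSlot (q lam : ℝ) (z : Lab n K) {i j : Fin n} (h : i ≠ j) :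
    pEdge n K q lam z (edgeSlot h) = if z i = z j then q + lam else q := by
  rcases le_total i j with hij | hij <;> simp [pEdge, edgeSlot, hij, eq_comm]

lemma Ymat_eq_edgeSlot (q : ℝ) (y : EdgeConf n) {i j : Fin n} (h : i ≠ j) :
    Ymat n q y i j = (if y (edgeSlot h) then 1 else 0) - q :=
  dif_neg h

lemma edgeSlot_eq_edgeSlot_iff {i j k l : Fin n} (hij : i ≠ j) (hkl : k ≠ l) :
    edgeSlot hij = edgeSlot hkl ↔ i = k ∧ j = l ∨ i = l ∧ j = k := by
  simp only [edgeSlot, Subtype.mk.injEq, Prod.mk.injEq]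
  grind

/-- The conditional expectation of the monomial with edge set `S` given the labels, as a function
of the labels `c` of the nodes of `S`: the centred edge between `a` and `b` contributes
`λ · 1{c a = c b}`. -/
def condMonomial {α : Type*} (lam : ℝ) (S : Finset (α × α)) (c : α → Fin K) : ℝ :=
  ∏ e ∈ S, if c e.1 = c e.2 then lam else 0

/-- The conditional expectation of the squared monomial with edge set `S` given the labels: an
edge contributes `p̄ = q̄ + λ(1 - 2q)` inside a community and `q̄ = q(1 - q)` across. -/
def condSecondMoment {α : Type*} (q lam : ℝ) (S : Finset (α × α)) (c : α → Fin K) : ℝ :=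
  ∏ e ∈ S, if c e.1 = c e.2 then q * (1 - q) + lam * (1 - 2 * q) else q * (1 - q)

variable {α : Type*} [Preorder α] {S : Finset (α × α)}

lemma injective_edgeSlot_comp (hS : ∀ e ∈ S, e.1 < e.2) (π : α ↪ Fin n) :
    Function.Injective fun e : S => edgeSlot (π.injective.ne (hS e e.2).ne) := by
  rintro ⟨⟨a, b⟩, he⟩ ⟨⟨c, d⟩, he'⟩ h
  rcases (edgeSlot_eq_edgeSlot_iff _ _).1 h with ⟨hac, hbd⟩ | ⟨had, hbc⟩
  · exact Subtype.ext (Prod.ext (π.injective hac) (π.injective hbd))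
  · obtain rfl : a = d := π.injective had
    obtain rfl : b = c := π.injective hbc
    exact absurd (hS _ he) (hS _ he').asymm

lemma condExpec_prod_Ymat (hS : ∀ e ∈ S, e.1 < e.2) (π : α ↪ Fin n) (q lam : ℝ)
    (z : Lab n K) (φ : ℝ → ℝ) :
    condExpec q lam z (fun y => ∏ e ∈ S, φ (Ymat n q y (π e.1) (π e.2)))
      = ∏ e ∈ S, if z (π e.1) = z (π e.2) then (q + lam) * φ (1 - q) + (1 - q - lam) * φ (-q)
          else q * φ (1 - q) + (1 - q) * φ (-q) := by
  have h := condExpec_prod q lam z ⟨_, injective_edgeSlot_comp hS π⟩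
    fun b => φ ((if b then 1 else 0) - q)
  simp only [Function.Embedding.coeFn_mk, ← Ymat_eq_edgeSlot, pEdge_edgeSlot] at h
  simp only [← prod_coe_sort S, h, if_true, Bool.false_eq_true, if_false, zero_sub]
  refine prod_congr rfl fun e _ => ?_
  split_ifs <;> ring

lemma condExpec_monomial (hS : ∀ e ∈ S, e.1 < e.2) (π : α ↪ Fin n) (q lam : ℝ) (z : Lab n K) :
    condExpec q lam z (fun y => ∏ e ∈ S, Ymat n q y (π e.1) (π e.2))
      = condMonomial lam S (z ∘ π) := by
  rw [condExpec_prod_Ymat hS π q lam z fun t => t]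
  refine prod_congr rfl fun e _ => if_congr Iff.rfl ?_ ?_ <;> ring

lemma condExpec_monomial_sq (hS : ∀ e ∈ S, e.1 < e.2) (π : α ↪ Fin n) (q lam : ℝ)
    (z : Lab n K) :
    condExpec q lam z (fun y => (∏ e ∈ S, Ymat n q y (π e.1) (π e.2)) ^ 2)
      = condSecondMoment q lam S (z ∘ π) := by
  simp only [← prod_pow]
  rw [condExpec_prod_Ymat hS π q lam z fun t => t ^ 2]
  refine prod_congr rfl fun e _ => if_congr Iff.rfl ?_ ?_ <;> ring

end ConditionalExpectation

/-! ### Connected components of a template -/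

section Components

variable {T : Template}

lemma reachable_of_mem_E {e : Fin T.v × Fin T.v} (he : e ∈ T.E) : T.graph.Reachable e.1 e.2 :=
  SimpleGraph.Adj.reachable ((SimpleGraph.fromRel_adj _ _ _).2 ⟨(T.hE e he).ne, .inl he⟩)

lemma eq_of_reachable_of_eq_on_edges {κ : Type*} {c : Fin T.v → κ} (hc : ∀ e ∈ T.E, c e.1 = c e.2)
    {a b : Fin T.v} (h : T.graph.Reachable a b) : c a = c b := by
  induction h.some with
  | nil => rfl
  | cons hadj walk ih =>
    refine Eq.trans ?_ (ih ⟨walk⟩)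
    rcases ((SimpleGraph.fromRel_adj _ _ _).1 hadj).2 with he | he
    · exact hc _ he
    · exact (hc _ he).symm

lemma reachable_compRep (T : Template) (w : Fin T.v) : T.graph.Reachable w (compRep T w) :=
  (mem_filter.1 (min'_mem {u | T.graph.Reachable w u} ⟨w, by simp⟩)).2

lemma compRep_eq_compRep {u w : Fin T.v} (h : T.graph.Reachable u w) :
    compRep T u = compRep T w := by
  have hcomp : univ.filter (T.graph.Reachable u) = univ.filter (T.graph.Reachable w) :=
    filter_congr fun a _ => ⟨h.symm.trans, h.trans⟩
  simp only [compRep, hcomp]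

lemma compRep_mem_edgeCompReps {e : Fin T.v × Fin T.v} (he : e ∈ T.E) :
    compRep T e.1 ∈ edgeCompReps T :=
  mem_filter.2 ⟨mem_univ _, (compRep_eq_compRep (reachable_compRep T e.1)).symm, e, he,
    reachable_compRep T e.1⟩

lemma eq_of_mem_edgeCompReps_of_reachable {u w : Fin T.v} (hu : u ∈ edgeCompReps T)
    (hw : w ∈ edgeCompReps T) (h : T.graph.Reachable u w) : u = w := by
  rw [← (mem_filter.1 hu).2.1, ← (mem_filter.1 hw).2.1, compRep_eq_compRep h]

lemma pairwiseDisjoint_compEdges (T : Template) :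
    (edgeCompReps T : Set (Fin T.v)).PairwiseDisjoint (compEdges T) := by
  intro u hu w hw huw
  refine disjoint_left.2 fun e he he' => huw ?_
  exact eq_of_mem_edgeCompReps_of_reachable hu hw
    ((mem_filter.1 he).2.symm.trans (mem_filter.1 he').2)

end Components

/-! ### Reduction to the labels of the nodes of the template -/

section Reduction

variable {n K : ℕ}

/-- The factor `P_{G_l,π} - E[P_{G_l,π}]` of `P̄_{G,π}` for the component `G_l` of `w`, averaged
conditionally on the labels `c` of the nodes of the template. -/
def condPcompCentered (lam : ℝ) (T : Template) (w : Fin T.v) (c : Lab T.v K) : ℝ :=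
  condMonomial lam (compEdges T w) c - 𝔼 c' : Lab T.v K, condMonomial lam (compEdges T w) c'

/-- The conditional expectation of `P̄_{G,π}` given the labels, as a function of the labels `c` of
the nodes of the template. -/
def condPbar (lam : ℝ) (T : Template) (c : Lab T.v K) : ℝ :=
  ∏ w ∈ edgeCompReps T, condPcompCentered lam T w c

/-- The common value of `E[x P̄_{G,π}]` for all `π ∈ Π_V`, as an average over the labels of the
nodes of the template only. -/
def crossMoment (K : ℕ) (lam : ℝ) (T : Template) : ℝ :=
  𝔼 c : Lab T.v K, xind T.v K T.v1 T.v2 c * condPbar lam T c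

/-- The common value of `E[P_{G,π}²]` for all `π ∈ Π_V`, as an average over the labels of the
nodes of the template only. -/
def secondMoment (K : ℕ) (q lam : ℝ) (T : Template) : ℝ :=
  𝔼 c : Lab T.v K, condSecondMoment q lam T.E c

variable [NeZero K] (q lam : ℝ) (T : Template) (π : Fin T.v ↪ Fin n)

lemma expec_Pcomp (w : Fin T.v) :
    expec n K q lam (fun _ y => Pcomp n q T π w y)
      = 𝔼 c : Lab T.v K, condMonomial lam (compEdges T w) c := by
  simp only [expec_eq_expect, Pcomp,
    condExpec_monomial (S := compEdges T w) fun e he => T.hE e (mem_filter.1 he).1]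
  exact expect_comp_embedding π _

lemma condExpec_Pbar (z : Lab n K) :
    condExpec q lam z (Pbar n K q lam T π) = condPbar lam T (z ∘ π) := by
  have hPbar : Pbar n K q lam T π = ∏ w ∈ edgeCompReps T, (Pcomp n q T π w
      - algebraMap ℝ (EdgeConf n → ℝ) (𝔼 c : Lab T.v K, condMonomial lam (compEdges T w) c)) := by
    funext y
    simp only [Pbar, Finset.prod_apply, Pi.sub_apply, Pi.algebraMap_apply, Algebra.algebraMap_self,
      RingHom.id_apply, expec_Pcomp]
  rw [hPbar, map_prod_sub_algebraMap _ _ _ fun w => condMonomial lam (compEdges T w) (z ∘ π)]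
  · rfl
  intro t ht
  have hdisj := (pairwiseDisjoint_compEdges T).subset (coe_subset.2 ht)
  have hE : ∀ e ∈ t.biUnion (compEdges T), e.1 < e.2 := fun e he => by
    obtain ⟨w, _, hw⟩ := mem_biUnion.1 he
    exact T.hE e (mem_filter.1 hw).1
  have h := condExpec_monomial hE π q lam z
  simp only [condMonomial, prod_biUnion hdisj] at h
  rw [← prod_fn] at h
  exact h

lemma expec_PG_sq :
    expec n K q lam (fun _ y => PG n q T π y ^ 2) = secondMoment K q lam T := by
  simp only [expec_eq_expect, PG, condExpec_monomial_sq T.hE]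
  exact expect_comp_embedding π _

lemma VG_eq (hn : 2 ≤ n) :
    VG n K hn q lam T = autCard T * (#(PiV n hn T) * secondMoment K q lam T) := by
  simp only [VG, expec_PG_sq, sum_const, nsmul_eq_mul]

lemma expec_xind_mul_Psi (hn : 2 ≤ n) :
    expec n K q lam (fun z y => xind n K ⟨0, by omega⟩ ⟨1, by omega⟩ z * Psi n K hn q lam T y)
      = #(PiV n hn T) * crossMoment K lam T / √(VG n K hn q lam T) := by
  have hPsi : Psi n K hn q lam T
      = (√(VG n K hn q lam T))⁻¹ • ∑ π ∈ PiV n hn T, Pbar n K q lam T π := by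
    funext y
    simp only [Psi, Pi.smul_apply, Finset.sum_apply, smul_eq_mul, div_eq_inv_mul]
  have hterm : ∀ π ∈ PiV n hn T,
      𝔼 z : Lab n K, xind n K ⟨0, by omega⟩ ⟨1, by omega⟩ z * condPbar lam T (z ∘ π)
        = crossMoment K lam T := fun π hπ => by
    rw [← (mem_filter.1 hπ).2.1, ← (mem_filter.1 hπ).2.2]
    exact expect_comp_embedding π fun c => xind T.v K T.v1 T.v2 c * condPbar lam T c
  rw [expec_mul_eq_expect, hPsi]
  simp only [map_smul, map_sum, condExpec_Pbar, smul_eq_mul, mul_left_comm _ (√_)⁻¹,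
    ← mul_expect, mul_sum, expect_sum_comm]
  rw [← mul_sum, sum_congr rfl hterm, sum_const, nsmul_eq_mul, inv_mul_eq_div]

end Reduction

/-! ### Vanishing cross moments -/

section Vanishing

variable {K : ℕ} {lam : ℝ} {T : Template}

lemma condMonomial_add_indicator [NeZero K] {S : Finset (Fin T.v × Fin T.v)} {A : Set (Fin T.v)}
    (hA : ∀ e ∈ S, (e.1 ∈ A ↔ e.2 ∈ A)) (lam : ℝ) (c : Lab T.v K) (t : Fin K) :
    condMonomial lam S (c + A.indicator fun _ => t) = condMonomial lam S c := by
  refine prod_congr rfl fun e he => ?_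
  by_cases h : e.1 ∈ A
  · simp [h, (hA e he).1 h]
  · simp [h, mt (hA e he).2 h]

lemma condPbar_add_indicator_reachable [NeZero K] (lam : ℝ) (a : Fin T.v) (c : Lab T.v K)
    (t : Fin K) :
    condPbar lam T (c + {b | T.graph.Reachable a b}.indicator fun _ => t) = condPbar lam T c := by
  refine prod_congr rfl fun w _ => ?_
  have hA : ∀ e ∈ compEdges T w, T.graph.Reachable a e.1 ↔ T.graph.Reachable a e.2 :=
    fun e he =>
      have hadj := reachable_of_mem_E (mem_filter.1 he).1
      ⟨fun h => h.trans hadj, fun h => h.trans hadj.symm⟩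
  rw [condPcompCentered, condMonomial_add_indicator hA, condPcompCentered]

lemma expect_xind_mul_eq_zero [NeZero K] {n : ℕ} {i j : Fin n} {A : Set (Fin n)} (hi : i ∈ A)
    (hj : j ∉ A) {g : Lab n K → ℝ} (hg : ∀ z t, g (z + A.indicator fun _ => t) = g z) :
    𝔼 z, xind n K i j z * g z = 0 := by
  simpa only [xind, Fintype.card_fin] using expect_eqInd_sub_mul_eq_zero hi hj hg

theorem crossMoment_eq_zero_of_not_reachable [NeZero K] (h : ¬ T.graph.Reachable T.v1 T.v2) :
    crossMoment K lam T = 0 :=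
  expect_xind_mul_eq_zero (A := {b | T.graph.Reachable T.v1 b}) (SimpleGraph.Reachable.refl _) h
    (condPbar_add_indicator_reachable lam T.v1)

lemma dependsOn_condPcompCentered (lam : ℝ) (T : Template) (w : Fin T.v) :
    DependsOn (condPcompCentered (K := K) lam T w) {b | T.graph.Reachable b w} := fun c c' h => by
  simp only [condPcompCentered, condMonomial]
  congr 1
  refine prod_congr rfl fun e he => ?_
  obtain ⟨heE, hew⟩ := mem_filter.1 he
  rw [h e.1 hew, h e.2 ((reachable_of_mem_E heE).symm.trans hew)]

lemma expect_condPcompCentered [NeZero K] (lam : ℝ) (T : Template) (w : Fin T.v) :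
    𝔼 c, condPcompCentered (K := K) lam T w c = 0 := by
  simp [condPcompCentered, expect_sub_distrib]

lemma exists_mem_E_reachable_of_not_isIsolated {w : Fin T.v} (hw : ¬ IsIsolated T w) :
    ∃ e ∈ T.E, T.graph.Reachable e.1 w := by
  simp only [IsIsolated, not_forall, not_and_or, not_not] at hw
  obtain ⟨e, he, rfl | rfl⟩ := hw
  · exact ⟨e, he, .rfl⟩
  · exact ⟨e, he, reachable_of_mem_E he⟩

theorem crossMoment_eq_zero_of_component_avoiding [NeZero K] {w : Fin T.v}
    (hw : ¬ IsIsolated T w) (h1 : ¬ T.graph.Reachable w T.v1) (h2 : ¬ T.graph.Reachable w T.v2) :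
    crossMoment K lam T = 0 := by
  obtain ⟨e, he, hew⟩ := exists_mem_E_reachable_of_not_isIsolated hw
  set r := compRep T e.1
  have hwr : T.graph.Reachable w r := hew.symm.trans (reachable_compRep T e.1)
  have hr : r ∈ edgeCompReps T := compRep_mem_edgeCompReps he
  let g (c : Lab T.v K) : ℝ :=
    xind T.v K T.v1 T.v2 c * ∏ w ∈ (edgeCompReps T).erase r, condPcompCentered lam T w c
  have hg : DependsOn g {b | T.graph.Reachable b r}ᶜ := fun c c' h => by
    have hx : xind T.v K T.v1 T.v2 c = xind T.v K T.v1 T.v2 c' := by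
      simp only [xind]
      rw [h T.v1 fun hA => h1 (hwr.trans hA.symm), h T.v2 fun hA => h2 (hwr.trans hA.symm)]
    have hother : ∀ u ∈ (edgeCompReps T).erase r,
        condPcompCentered lam T u c = condPcompCentered lam T u c' := fun u hu => by
      obtain ⟨hur, hu⟩ := mem_erase.1 hu
      exact dependsOn_condPcompCentered lam T u fun b hb => h b fun hbr =>
        hur (eq_of_mem_edgeCompReps_of_reachable hu hr (hb.symm.trans hbr))
    simp only [g, hx, prod_congr rfl hother]
  calc crossMoment K lam T = 𝔼 c, condPcompCentered lam T r c * g c :=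
        expect_congr rfl fun c _ => by
          rw [condPbar, ← mul_prod_erase _ _ hr]
          exact mul_left_comm _ _ _
    _ = (𝔼 c : Lab T.v K, condPcompCentered lam T r c) * 𝔼 c, g c :=
        expect_mul_eq_mul_of_dependsOn (dependsOn_condPcompCentered lam T r) hg
    _ = 0 := by rw [expect_condPcompCentered, zero_mul]

end Vanishing

/-! ### Moments of connected templates -/

section Connected

variable {K : ℕ} {q lam : ℝ} {T : Template}

lemma nonempty_E_of_connected (hc : T.graph.Connected) : T.E.Nonempty := by
  have : Nontrivial (Fin T.v) := Fin.nontrivial_iff_two_le.2 T.hv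
  obtain ⟨a, h⟩ := hc.preconnected.exists_adj_of_nontrivial T.v1
  rcases ((SimpleGraph.fromRel_adj _ _ _).1 h).2 with h | h
  exacts [⟨_, h⟩, ⟨_, h⟩]

lemma condPbar_of_connected (hc : T.graph.Connected) (lam : ℝ) (c : Lab T.v K) :
    condPbar lam T c = condMonomial lam T.E c - 𝔼 c' : Lab T.v K, condMonomial lam T.E c' := by
  obtain ⟨e, he⟩ := nonempty_E_of_connected hc
  have hreps : edgeCompReps T = {compRep T e.1} :=
    eq_singleton_iff_unique_mem.2 ⟨compRep_mem_edgeCompReps he, fun w hw =>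
      eq_of_mem_edgeCompReps_of_reachable hw (compRep_mem_edgeCompReps he) (hc.preconnected _ _)⟩
  have hedges (w : Fin T.v) : compEdges T w = T.E :=
    filter_true_of_mem fun e _ => hc.preconnected e.1 w
  simp only [condPbar, condPcompCentered, hreps, prod_singleton, hedges]

lemma condMonomial_of_connected (hc : T.graph.Connected) (lam : ℝ) (c : Lab T.v K) :
    condMonomial lam T.E c = lam ^ #T.E * if ∀ a b, c a = c b then 1 else 0 := by
  have hiff : (∀ e ∈ T.E, c e.1 = c e.2) ↔ ∀ a b, c a = c b :=
    ⟨fun h a b => eq_of_reachable_of_eq_on_edges h (hc.preconnected a b), fun h e _ => h _ _⟩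
  simp only [condMonomial, prod_ite_zero, hiff, prod_const, mul_ite, mul_one, mul_zero]

lemma expect_condMonomial_of_connected [NeZero K] (hc : T.graph.Connected) (lam : ℝ) :
    𝔼 c : Lab T.v K, condMonomial lam T.E c = lam ^ #T.E * (1 / (K : ℝ)) ^ (T.v - 1) := by
  have : Nonempty (Fin T.v) := ⟨T.v1⟩
  simp only [condMonomial_of_connected hc, ← mul_expect, expect_forall_eq, Fintype.card_fin]

lemma Template.v1_ne_v2 (T : Template) : T.v1 ≠ T.v2 := by simp [v1, v2]

theorem crossMoment_of_connected [NeZero K] (hc : T.graph.Connected) (lam : ℝ) :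
    crossMoment K lam T = (1 - 1 / (K : ℝ)) * (lam ^ #T.E * (1 / (K : ℝ)) ^ (T.v - 1)) := by
  have hx : 𝔼 c : Lab T.v K, xind T.v K T.v1 T.v2 c = 0 := by
    simpa only [mul_one] using expect_xind_mul_eq_zero (A := {T.v1}) (g := fun _ => 1)
      rfl T.v1_ne_v2.symm fun _ _ => rfl
  have hxm (c : Lab T.v K) : xind T.v K T.v1 T.v2 c * condMonomial lam T.E c
      = (1 - 1 / (K : ℝ)) * condMonomial lam T.E c := by
    rw [condMonomial_of_connected hc]
    split_ifs with h
    · rw [xind, if_pos (h _ _)]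
    · simp only [mul_zero]
  simp only [crossMoment, condPbar_of_connected hc, mul_sub, hxm, expect_sub_distrib,
    ← expect_mul, ← mul_expect]
  rw [hx, zero_mul, sub_zero, expect_condMonomial_of_connected hc]

lemma abs_crossMoment_le [NeZero K] (hc : T.graph.Connected) (hlam : 0 ≤ lam) :
    |crossMoment K lam T| ≤ lam ^ #T.E * (1 / (K : ℝ)) ^ (T.v - 1) := by
  have hK : 1 / (K : ℝ) ≤ 1 := by
    rw [one_div]; exact inv_le_one_of_one_le₀ (mod_cast NeZero.one_le)
  have hK0 : 0 ≤ 1 / (K : ℝ) := by positivity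
  rw [crossMoment_of_connected hc, abs_of_nonneg (mul_nonneg (sub_nonneg.2 hK) (by positivity))]
  exact mul_le_of_le_one_left (by positivity) (by linarith)

lemma expect_condMonomial_le_secondMoment (hq : 0 ≤ q) (hlam : 0 ≤ lam) (hql : q + 2 * lam ≤ 1)
    (K : ℕ) (T : Template) :
    𝔼 c : Lab T.v K, condMonomial lam T.E c ≤ secondMoment K q lam T := by
  refine expect_le_expect fun c _ => prod_le_prod (fun e _ => ?_) fun e _ => ?_
  · split_ifs <;> simp [hlam]
  · split_ifs <;> nlinarith

lemma pow_le_secondMoment [NeZero K] (hq : 0 ≤ q) (hq2 : q ≤ 1 / 2) (hlam : 0 ≤ lam)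
    (T : Template) :
    (q * (1 - q)) ^ #T.E ≤ secondMoment K q lam T := by
  refine le_expect univ_nonempty fun c _ => ?_
  rw [condSecondMoment, ← prod_const]
  refine prod_le_prod (fun e _ => by nlinarith) fun e _ => ?_
  split_ifs <;> nlinarith

lemma card_PiV_le {n : ℕ} (hn : 2 ≤ n) (T : Template) : #(PiV n hn T) ≤ n ^ (T.v - 2) := by
  let f (a : Fin T.v) : Fin n := if a = T.v1 then ⟨0, by omega⟩ else ⟨1, by omega⟩
  have hf : ∀ π ∈ PiV n hn T, Set.EqOn π f ({T.v1, T.v2} : Finset (Fin T.v)) := fun π hπ => by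
    obtain ⟨h1, h2⟩ := (mem_filter.1 hπ).2
    intro a ha
    obtain rfl | rfl : a = T.v1 ∨ a = T.v2 := by simpa using ha
    · simp only [h1, f, if_true]
    · simp only [h2, f, if_neg T.v1_ne_v2.symm]
  simpa only [Fintype.card_fin, card_pair T.v1_ne_v2] using card_embeddings_le_of_eqOn hf

lemma one_le_autCard (T : Template) : 1 ≤ autCard T :=
  Nat.card_pos_iff.2 ⟨⟨1, by simp⟩, inferInstance⟩

end Connected

/-! ### The bound for connected templates -/

lemma abs_mul_div_sqrt_le {A N M : ℝ} (hA : 1 ≤ A) (hN : 0 ≤ N) (hM : 0 < M) (a : ℝ) :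
    |N * a / √(A * (N * M))| ≤ √N * (|a| / √M) := by
  have hM' : 0 < √M := Real.sqrt_pos.2 hM
  rw [abs_div, abs_mul, abs_of_nonneg hN, abs_of_nonneg (Real.sqrt_nonneg _)]
  refine div_le_of_le_mul₀ (Real.sqrt_nonneg _) (by positivity) ?_
  calc N * |a| = √N * (|a| / √M) * √(N * M) := by
        rw [Real.sqrt_mul hN, mul_mul_mul_comm, Real.mul_self_sqrt hN, div_mul_cancel₀ _ hM'.ne']
    _ ≤ √N * (|a| / √M) * √(A * (N * M)) := by
        have hle : N * M ≤ A * (N * M) := le_mul_of_one_le_left (by positivity) hA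
        gcongr

lemma sqrt_pow_of_nonneg {x : ℝ} (hx : 0 ≤ x) (k : ℕ) : √(x ^ k) = √x ^ k := by
  simpa only [prod_const, card_range] using Real.sqrt_prod (range k) fun _ _ => hx

lemma rpow_neg_half_mul_pow {x : ℝ} (hx : 0 < x) {b : ℝ} (hb : 0 ≤ b) (a : ℝ) (e : ℕ) {v : ℕ}
    (hv : 2 ≤ v) :
    x ^ (-(1 : ℝ) / 2) * (√x * a * b ^ ((e : ℝ) / ((v : ℝ) - 1))) ^ (v - 1)
      = √x ^ (v - 2) * (a ^ (v - 1) * b ^ e) := by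
  have hcast : (v : ℝ) - 1 = (v - 1 : ℕ) := by rw [Nat.cast_sub (by omega), Nat.cast_one]
  have hv0 : ((v - 1 : ℕ) : ℝ) ≠ 0 := by exact_mod_cast (by omega : v - 1 ≠ 0)
  have hroot : (b ^ ((e : ℝ) / ((v : ℝ) - 1))) ^ (v - 1) = b ^ e := by
    rw [hcast, ← Real.rpow_mul_natCast hb, div_mul_cancel₀ _ hv0, Real.rpow_natCast]
  have hhalf : x ^ (-(1 : ℝ) / 2) * √x = 1 := by
    rw [Real.sqrt_eq_rpow, ← Real.rpow_add hx]
    norm_num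
  have hsucc : √x ^ (v - 1) = √x * √x ^ (v - 2) := by
    rw [← pow_succ', show v - 2 + 1 = v - 1 by omega]
  rw [mul_pow, mul_pow, hroot, hsucc]
  linear_combination √x ^ (v - 2) * a ^ (v - 1) * b ^ e * hhalf

section ConnectedBound

variable {n K : ℕ} [NeZero K] {q lam : ℝ} {T : Template}

lemma abs_crossMoment_div_sqrt_le (hc : T.graph.Connected) (hq0 : 0 < q) (hq2 : q ≤ 1 / 2)
    (hlam : 0 ≤ lam) :
    |crossMoment K lam T| / √(secondMoment K q lam T)
      ≤ (1 / (K : ℝ)) ^ (T.v - 1) * (lam / √(q * (1 - q))) ^ #T.E := by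
  have hqq : 0 < q * (1 - q) := mul_pos hq0 (by linarith)
  calc |crossMoment K lam T| / √(secondMoment K q lam T)
      ≤ lam ^ #T.E * (1 / (K : ℝ)) ^ (T.v - 1) / √((q * (1 - q)) ^ #T.E) := by
        gcongr
        exacts [abs_crossMoment_le hc hlam, pow_le_secondMoment hq0.le hq2 hlam T]
    _ = (1 / (K : ℝ)) ^ (T.v - 1) * (lam / √(q * (1 - q))) ^ #T.E := by
        rw [sqrt_pow_of_nonneg hqq.le, div_pow]
        ring

lemma abs_crossMoment_div_sqrt_le_sqrt (hc : T.graph.Connected) (hq : 0 ≤ q) (hlam : 0 ≤ lam)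
    (hql : q + 2 * lam ≤ 1) :
    |crossMoment K lam T| / √(secondMoment K q lam T)
      ≤ √(1 / (K : ℝ)) ^ (T.v - 1) * √lam ^ #T.E := by
  have hle : |crossMoment K lam T| ≤ secondMoment K q lam T := by
    refine (abs_crossMoment_le hc hlam).trans ?_
    rw [← expect_condMonomial_of_connected hc]
    exact expect_condMonomial_le_secondMoment hq hlam hql K T
  calc |crossMoment K lam T| / √(secondMoment K q lam T)
      ≤ √|crossMoment K lam T| := by
        refine div_le_of_le_mul₀ (Real.sqrt_nonneg _) (Real.sqrt_nonneg _) ?_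
        calc |crossMoment K lam T| = √|crossMoment K lam T| * √|crossMoment K lam T| :=
              (Real.mul_self_sqrt (abs_nonneg _)).symm
          _ ≤ _ := by gcongr
    _ ≤ √(lam ^ #T.E * (1 / (K : ℝ)) ^ (T.v - 1)) := by
        gcongr
        exact abs_crossMoment_le hc hlam
    _ = √(1 / (K : ℝ)) ^ (T.v - 1) * √lam ^ #T.E := by
        rw [Real.sqrt_mul (by positivity), sqrt_pow_of_nonneg hlam,
          sqrt_pow_of_nonneg (by positivity), mul_comm]

theorem abs_expec_xind_mul_Psi_le (hn : 2 ≤ n) (hq0 : 0 < q) (hq2 : q ≤ 1 / 2) (hlam : 0 ≤ lam) :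
    |expec n K q lam fun z y => xind n K ⟨0, by omega⟩ ⟨1, by omega⟩ z * Psi n K hn q lam T y|
      ≤ √n ^ (T.v - 2) * (|crossMoment K lam T| / √(secondMoment K q lam T)) := by
  have hM : 0 < secondMoment K q lam T :=
    (pow_pos (mul_pos hq0 (by linarith)) _).trans_le (pow_le_secondMoment hq0.le hq2 hlam T)
  rw [expec_xind_mul_Psi, VG_eq]
  refine (abs_mul_div_sqrt_le (mod_cast one_le_autCard T) (Nat.cast_nonneg _) hM _).trans ?_
  rw [← sqrt_pow_of_nonneg n.cast_nonneg]
  gcongr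
  exact_mod_cast card_PiV_le hn T

theorem abs_expec_xind_mul_Psi_le_of_connected (hn : 2 ≤ n) (hc : T.graph.Connected) (hq0 : 0 < q)
    (hq2 : q ≤ 1 / 2) (hlam : 0 ≤ lam) (hql : q + 2 * lam ≤ 1) :
    |expec n K q lam fun z y => xind n K ⟨0, by omega⟩ ⟨1, by omega⟩ z * Psi n K hn q lam T y| ≤
      (n : ℝ) ^ (-(1 : ℝ) / 2) *
        (min (√n / K * (lam / √(q * (1 - q))) ^ ((#T.E : ℝ) / ((T.v : ℝ) - 1)))
          (√((n : ℝ) / K) * lam ^ ((#T.E : ℝ) / ((T.v : ℝ) - 1) / 2))) ^ (T.v - 1) := by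
  have hn0 : (0 : ℝ) < n := by exact_mod_cast (by omega : 0 < n)
  refine (abs_expec_xind_mul_Psi_le hn hq0 hq2 hlam).trans ?_
  rcases min_choice (√n / K * (lam / √(q * (1 - q))) ^ ((#T.E : ℝ) / ((T.v : ℝ) - 1)))
    (√((n : ℝ) / K) * lam ^ ((#T.E : ℝ) / ((T.v : ℝ) - 1) / 2)) with h | h <;> rw [h]
  · rw [div_eq_mul_one_div (√n), rpow_neg_half_mul_pow hn0 (by positivity) _ _ T.hv]
    gcongr
    exact abs_crossMoment_div_sqrt_le hc hq0 hq2 hlam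
  · rw [div_eq_mul_one_div (n : ℝ), Real.sqrt_mul hn0.le, Real.rpow_div_two_eq_sqrt _ hlam,
      rpow_neg_half_mul_pow hn0 (Real.sqrt_nonneg _) _ _ T.hv]
    gcongr
    exact abs_crossMoment_div_sqrt_le_sqrt hc hq0.le hlam hql

end ConnectedBound

theorem statement19_general {n K : ℕ} [NeZero K] {q lam : ℝ} (hn : 2 ≤ n) (T : Template)
    (hT : ∀ w, w ≠ T.v1 → w ≠ T.v2 → ¬ IsIsolated T w) :
    (T.graph.Connected → 0 < q → q ≤ 1 / 2 → q + 2 * lam ≤ 1 → 0 ≤ lam →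
      |expec n K q lam fun z y =>
          xind n K ⟨0, by omega⟩ ⟨1, by omega⟩ z * Psi n K hn q lam T y| ≤
        (n : ℝ) ^ (-(1 : ℝ) / 2) *
          (min (√n / K * (lam / √(q * (1 - q))) ^ ((#T.E : ℝ) / ((T.v : ℝ) - 1)))
            (√((n : ℝ) / K) * lam ^ ((#T.E : ℝ) / ((T.v : ℝ) - 1) / 2))) ^ (T.v - 1)) ∧
    ((∃ w : Fin T.v, ¬ T.graph.Reachable w T.v1 ∧ ¬ T.graph.Reachable w T.v2) →
      expec n K q lam (fun z y =>
        xind n K ⟨0, by omega⟩ ⟨1, by omega⟩ z * Psi n K hn q lam T y) = 0) ∧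
    (¬ T.graph.Reachable T.v1 T.v2 →
      expec n K q lam (fun z y =>
        xind n K ⟨0, by omega⟩ ⟨1, by omega⟩ z * Psi n K hn q lam T y) = 0) := by
  refine ⟨fun hc hq0 hq2 hql hlam =>
    abs_expec_xind_mul_Psi_le_of_connected hn hc hq0 hq2 hlam hql, ?_, fun h12 => ?_⟩
  · rintro ⟨w, h1, h2⟩
    have hw : ¬ IsIsolated T w := hT w (fun h => h1 (h ▸ .rfl)) fun h => h2 (h ▸ .rfl)
    rw [expec_xind_mul_Psi, crossMoment_eq_zero_of_component_avoiding hw h1 h2, mul_zero, zero_div]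
  · rw [expec_xind_mul_Psi, crossMoment_eq_zero_of_not_reachable h12, mul_zero, zero_div]

theorem statement19 (n K D : ℕ) (q lam : ℝ)
    (hn : 2 ≤ n) (hK : 2 ≤ K) (hKn : K ≤ n)
    (hq0 : 0 < q) (hq2 : q ≤ 1 / 2) (hql : q + 2 * lam ≤ 1) (hlam : 0 < lam) (hD : 2 ≤ D)
    (𝒢 : Set Template) (h𝒢 : IsTemplateBasis D 𝒢) (T : Template) (hT : T ∈ 𝒢) :
    (T.graph.Connected →
      |expec n K q lam fun z y =>
          xind n K ⟨0, by omega⟩ ⟨1, by omega⟩ z * Psi n K hn q lam T y| ≤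
        (n : ℝ) ^ (-(1 : ℝ) / 2) *
          (min (Real.sqrt n / K *
              (lam / Real.sqrt (q * (1 - q))) ^ ((T.E.card : ℝ) / ((T.v : ℝ) - 1)))
            (Real.sqrt ((n : ℝ) / K) *
              lam ^ ((T.E.card : ℝ) / ((T.v : ℝ) - 1) / 2))) ^ (T.v - 1)) ∧
    ((∃ w : Fin T.v, ¬ T.graph.Reachable w T.v1 ∧ ¬ T.graph.Reachable w T.v2) →
      expec n K q lam (fun z y =>
        xind n K ⟨0, by omega⟩ ⟨1, by omega⟩ z * Psi n K hn q lam T y) = 0) ∧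
    (¬ T.graph.Reachable T.v1 T.v2 →
      expec n K q lam (fun z y =>
        xind n K ⟨0, by omega⟩ ⟨1, by omega⟩ z * Psi n K hn q lam T y) = 0) := by
  have : NeZero K := ⟨by omega⟩
  obtain ⟨hconn, hzero⟩ := statement19_general (K := K) (q := q) (lam := lam) hn T (h𝒢.1 T hT).2.2
  exact ⟨fun hc => hconn hc hq0 hq2 hql hlam.le, hzero⟩

end SBM
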